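/- arXiv:1803.05047 — 2 statements merged into one kernel-verified Lean document; each statement's English description precedes it below -/
import Mathlib

section
/- The Clifford group 𝒞, i.e., the subgroup of GL(3,ℂ) generated by H and S, is a finite group of order 648. -/
open Matrix Complex

noncomputable section

/-- ω = exp(2πi/3), a primitive third root of unity. -/
def ω : ℂ := exp (2 * Real.pi * I / 3)

/-- ζ = exp(2πi/9), a primitive ninth root of unity. -/
def ζ : ℂ := exp (2 * Real.pi * I / 9)

/-- The qutrit Pauli X matrix. -/
def Xmat : Matrix (Fin 3) (Fin 3) ℂ := !![0,0,1; 1,0,0; 0,1,0]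

/-- The qutrit Pauli Z matrix. -/
def Zmat : Matrix (Fin 3) (Fin 3) ℂ := !![1,0,0; 0,ω,0; 0,0,ω^2]

/-- The qutrit Hadamard matrix H = (1/(i√3))·[[1,1,1],[1,ω,ω²],[1,ω²,ω]]. -/
def Hmat : Matrix (Fin 3) (Fin 3) ℂ :=
  (I * (Real.sqrt 3 : ℂ))⁻¹ • !![1,1,1; 1,ω,ω^2; 1,ω^2,ω]

/-- The qutrit phase matrix S = ζ⁸·diag(1,1,ω). -/
def Smat : Matrix (Fin 3) (Fin 3) ℂ := ζ^8 • !![1,0,0; 0,1,0; 0,0,ω]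

/-- The qutrit T matrix T = diag(1,ζ,ζ⁸). -/
def Tmat : Matrix (Fin 3) (Fin 3) ℂ := !![1,0,0; 0,ζ,0; 0,0,ζ^8]

lemma omega_ne_zero : ω ≠ 0 := Complex.exp_ne_zero _
lemma zeta_ne_zero : ζ ≠ 0 := Complex.exp_ne_zero _

lemma omega_im_pos : 0 < ω.im := by
  have h : ω = Complex.exp ((2 * Real.pi / 3 : ℝ) * I) := by
    rw [ω]; push_cast; ring_nf
  rw [h, Complex.exp_ofReal_mul_I_im]
  apply Real.sin_pos_of_pos_of_lt_pi
  · positivity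
  · nlinarith [Real.pi_pos]

lemma omega_ne_one : ω ≠ 1 := by
  intro h
  have := omega_im_pos
  rw [h] at this
  simp at this

lemma omega_cube : ω ^ 3 = 1 := by
  rw [ω, ← Complex.exp_nat_mul]
  rw [show (3:ℕ) * (2 * Real.pi * I / 3) = 2 * Real.pi * I by push_cast; ring]
  exact Complex.exp_two_pi_mul_I

lemma detX : Xmat.det ≠ 0 := by
  simp [Xmat, Matrix.det_fin_three]

lemma detZ : Zmat.det ≠ 0 := by
  simp [Zmat, Matrix.det_fin_three, omega_ne_zero]

lemma detS : Smat.det ≠ 0 := by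
  simp [Smat, Matrix.det_fin_three, omega_ne_zero, zeta_ne_zero]

lemma detT : Tmat.det ≠ 0 := by
  simp [Tmat, Matrix.det_fin_three, zeta_ne_zero]

lemma detH : Hmat.det ≠ 0 := by
  rw [Hmat, Matrix.det_smul]
  apply mul_ne_zero
  · apply pow_ne_zero
    apply inv_ne_zero
    apply mul_ne_zero Complex.I_ne_zero
    simp [Complex.ofReal_ne_zero]
  · rw [Matrix.det_fin_three]
    simp [Matrix.vecHead, Matrix.vecTail]
    intro h
    have h3 : ω ^ 3 = 1 := omega_cube
    have key : 3 * ω * (ω - 1) = 0 := by linear_combination h + ω * h3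
    rcases mul_eq_zero.mp key with h' | h'
    · rcases mul_eq_zero.mp h' with h'' | h''
      · norm_num at h''
      · exact omega_ne_zero h''
    · exact omega_ne_one (by linear_combination h')

/-- X as an element of GL(3, ℂ). -/
def Xg : GL (Fin 3) ℂ := Matrix.GeneralLinearGroup.mkOfDetNeZero Xmat detX

/-- Z as an element of GL(3, ℂ). -/
def Zg : GL (Fin 3) ℂ := Matrix.GeneralLinearGroup.mkOfDetNeZero Zmat detZ

/-- H as an element of GL(3, ℂ). -/
def Hg : GL (Fin 3) ℂ := Matrix.GeneralLinearGroup.mkOfDetNeZero Hmat detH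

/-- S as an element of GL(3, ℂ). -/
def Sg : GL (Fin 3) ℂ := Matrix.GeneralLinearGroup.mkOfDetNeZero Smat detS

/-- T as an element of GL(3, ℂ). -/
def Tg : GL (Fin 3) ℂ := Matrix.GeneralLinearGroup.mkOfDetNeZero Tmat detT

/-- The Clifford group 𝒞: the subgroup of GL(3,ℂ) generated by H and S. -/
def Cliff : Subgroup (GL (Fin 3) ℂ) := Subgroup.closure {Hg, Sg}

/-- The Clifford+T group: the subgroup of GL(3,ℂ) generated by H, S and T. -/
def CliffT : Subgroup (GL (Fin 3) ℂ) := Subgroup.closure {Hg, Sg, Tg}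

/-- The subgroup 𝒮 of GL(3,ℂ) generated by S and X. -/
def Sgrp : Subgroup (GL (Fin 3) ℂ) := Subgroup.closure {Sg, Xg}

/-- Letters of words over the alphabet {H, S, T}. -/
inductive Letter : Type
  | H : Letter
  | S : Letter
  | T : Letter
  deriving DecidableEq

/-- The gate associated to a letter. -/
def Letter.g : Letter → GL (Fin 3) ℂ
  | .H => Hg
  | .S => Sg
  | .T => Tg

/-- The product of the letters of a word. -/
def wordProd (w : List Letter) : GL (Fin 3) ℂ := (w.map Letter.g).prod

/-- The allowed prefixes of a canonical form: ε, T, H²T. -/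
def Prefixes : Set (List Letter) := {[], [.T], [.H, .H, .T]}

/-- The allowed syllables of a canonical form: HT, H³T, SHT, SH³T, S²HT, S²H³T. -/
def Syllables : Set (List Letter) :=
  {[.H, .T], [.H, .H, .H, .T], [.S, .H, .T],
   [.S, .H, .H, .H, .T], [.S, .S, .H, .T], [.S, .S, .H, .H, .H, .T]}

/-- The T-count of a canonical form with prefix `p` and syllable list `ss`:
`k` if the prefix is empty and `k+1` otherwise, where `k` is the number of syllables. -/
def TCount (p : List Letter) (ss : List (List Letter)) : ℕ :=
  ss.length + (if p = [] then 0 else 1)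

/-- P₊ = (P + P²)/√6. -/
def Pplus (P : Matrix (Fin 3) (Fin 3) ℂ) : Matrix (Fin 3) (Fin 3) ℂ :=
  ((Real.sqrt 6 : ℂ))⁻¹ • (P + P ^ 2)

/-- P₋ = i(P − P²)/√6. -/
def Pminus (P : Matrix (Fin 3) (Fin 3) ℂ) : Matrix (Fin 3) (Fin 3) ℂ :=
  (I * ((Real.sqrt 6 : ℂ))⁻¹) • (P - P ^ 2)

/-- The ordered tuple (Q₁, …, Q₈) = (Z₊, X₊, (XZ)₊, (XZ²)₊, Z₋, X₋, (XZ)₋, (XZ²)₋). -/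
def Q : Fin 8 → Matrix (Fin 3) (Fin 3) ℂ :=
  ![Pplus Zmat, Pplus Xmat, Pplus (Xmat * Zmat), Pplus (Xmat * Zmat ^ 2),
    Pminus Zmat, Pminus Xmat, Pminus (Xmat * Zmat), Pminus (Xmat * Zmat ^ 2)]

/-- The adjoint representation Û of U, the 8×8 real matrix with
entries Û_{ij} = tr(Qᵢ U Qⱼ U†). -/
def adj (U : Matrix (Fin 3) (Fin 3) ℂ) : Matrix (Fin 8) (Fin 8) ℝ :=
  Matrix.of fun i j => (Matrix.trace (Q i * U * Q j * Uᴴ)).re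

/-- The top-left 4×4 quadrant Û₊₊. -/
def blockPP (A : Matrix (Fin 8) (Fin 8) ℝ) : Matrix (Fin 4) (Fin 4) ℝ :=
  Matrix.of fun i j => A ⟨i.val, by omega⟩ ⟨j.val, by omega⟩

/-- The top-right 4×4 quadrant Û₊₋. -/
def blockPM (A : Matrix (Fin 8) (Fin 8) ℝ) : Matrix (Fin 4) (Fin 4) ℝ :=
  Matrix.of fun i j => A ⟨i.val, by omega⟩ ⟨j.val + 4, by omega⟩

/-- The bottom-left 4×4 quadrant Û₋₊. -/
def blockMP (A : Matrix (Fin 8) (Fin 8) ℝ) : Matrix (Fin 4) (Fin 4) ℝ :=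
  Matrix.of fun i j => A ⟨i.val + 4, by omega⟩ ⟨j.val, by omega⟩

/-- The bottom-right 4×4 quadrant Û₋₋. -/
def blockMM (A : Matrix (Fin 8) (Fin 8) ℝ) : Matrix (Fin 4) (Fin 4) ℝ :=
  Matrix.of fun i j => A ⟨i.val + 4, by omega⟩ ⟨j.val + 4, by omega⟩

/-- α = sin(2π/9). -/
def αR : ℝ := Real.sin (2 * Real.pi / 9)

/-- The ring ℤ[α]: the subring of ℝ generated by 1/2 and α. -/
def Zα : Subring ℝ := Subring.closure {1/2, αR}

/-- The ring ℤ[1/2, 1/α]: the subring of ℝ generated by 1/2, α and α⁻¹. -/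
def Zhα : Subring ℝ := Subring.closure {1/2, αR, αR⁻¹}

lemma alpha_mem_Zα : αR ∈ Zα := Subring.subset_closure (by simp)

/-!
Over `ZMod p` with `p` odd, conjugation by the Fourier gate and by the quadratic phase gate permutes
the Weyl operators up to phases, acting on phase space as a quarter turn and as a shear. These two
generate `SL(2, p)`, of order `p (p² - 1)`. An element acting trivially on phase space is a scalar
times a Weyl operator by Schur's lemma; comparing determinants, the scalar is a `p`-th root of
unity, so the element lies in the Heisenberg group, of order `p³`. Conversely, the group generated
by the gates `h` and `s` contains the Heisenberg group: `h²` is the parity operator up to a scalar,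
so the commutator of `h²` and `s` is the clock, and `h⁻¹` conjugates the clock to the shift. For
`p = 3` the order is `27 * 24 = 648`.
-/

open scoped MatrixGroups

section SpecialLinear

theorem card_specialLinearGroup_mul_card_units {n F : Type*} [Fintype n] [DecidableEq n]
    [Nonempty n] [Field F] :
    Nat.card (Matrix.SpecialLinearGroup n F) * Nat.card Fˣ = Nat.card (GL n F) := by
  have ker_det : (GeneralLinearGroup.det (n := n) (R := F)).ker =
      (SpecialLinearGroup.toGL (n := n) (R := F)).range := by
    ext g
    rw [MonoidHom.mem_ker, Units.ext_iff]
    exact ⟨fun hg => ⟨⟨g, hg⟩, Units.ext rfl⟩, by rintro ⟨A, rfl⟩; exact A.2⟩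
  have range_det : (GeneralLinearGroup.det (n := n) (R := F)).range = ⊤ :=
    MonoidHom.range_eq_top.2 GeneralLinearGroup.det_surjective
  rw [← Subgroup.card_mul_index (GeneralLinearGroup.det (n := n) (R := F)).ker,
    Subgroup.index_ker, range_det, Subgroup.card_top, ker_det,
    Nat.card_congr (MonoidHom.ofInjective SpecialLinearGroup.toGL_injective).toEquiv]

theorem card_specialLinearGroup_two (F : Type*) [Field F] [Fintype F] :
    Nat.card SL(2, F) = Fintype.card F * (Fintype.card F ^ 2 - 1) := by
  classical
  have one_lt_card : 1 < Fintype.card F := Fintype.one_lt_card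
  have card_GL : Nat.card (GL (Fin 2) F) =
      Fintype.card F * (Fintype.card F ^ 2 - 1) * (Fintype.card F - 1) := by
    rw [Matrix.card_GL_field, Fin.prod_univ_two]
    simp only [Fin.val_zero, Fin.val_one, pow_zero, pow_one]
    rw [sq, ← Nat.mul_sub_one]
    ring
  have card_units : Nat.card Fˣ = Fintype.card F - 1 := by
    rw [Nat.card_eq_fintype_card, Fintype.card_units]
  refine Nat.eq_of_mul_eq_mul_right (Nat.sub_pos_of_lt one_lt_card) ?_
  rw [← card_units, card_specialLinearGroup_mul_card_units, card_GL, card_units]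

/-- The quarter turn of `R²`: the action of the Fourier gate on phase space. -/
def quarterTurn (R : Type*) [CommRing R] : SL(2, R) :=
  ⟨!![0, -1; 1, 0], by simp [det_fin_two_of]⟩

/-- The shear of `R²` that fixes the second basis vector: the action of the quadratic phase gate on
phase space. -/
def shear (R : Type*) [CommRing R] : SL(2, R) :=
  SpecialLinearGroup.transvection one_ne_zero 1

variable {R : Type*} [CommRing R]

theorem coe_quarterTurn : (quarterTurn R : Matrix (Fin 2) (Fin 2) R) = !![0, -1; 1, 0] := rfl

theorem quarterTurn_sq : quarterTurn R ^ 2 = -1 := by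
  ext i j
  fin_cases i <;> fin_cases j <;> simp [sq, coe_quarterTurn]

theorem toLin'_quarterTurn (v : Fin 2 → R) :
    SpecialLinearGroup.toLin' (quarterTurn R) v = ![-v 1, v 0] := by
  ext i
  fin_cases i <;> simp [SpecialLinearGroup.toLin'_apply, coe_quarterTurn, mulVec_eq_sum]

theorem toLin'_shear (v : Fin 2 → R) :
    SpecialLinearGroup.toLin' (shear R) v = ![v 0, v 1 + v 0] := by
  ext i
  fin_cases i <;> simp [SpecialLinearGroup.toLin'_apply, shear,
    SpecialLinearGroup.transvection_coe, single_mulVec]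

theorem transvection_eq_shear_pow {n : ℕ} [NeZero n] (a : ZMod n) :
    SpecialLinearGroup.transvection one_ne_zero a = shear (ZMod n) ^ a.val := by
  have pow_shear (m : ℕ) :
      shear (ZMod n) ^ m = SpecialLinearGroup.transvection one_ne_zero (m : ZMod n) := by
    induction m with
    | zero => simp [SpecialLinearGroup.transvection_coeff_zero]
    | succ m ih => rw [pow_succ, ih, shear, ← SpecialLinearGroup.transvection_add, Nat.cast_succ]
  rw [pow_shear, ZMod.natCast_zmod_val]

theorem transvection_eq_conj_quarterTurn (a : R) :
    SpecialLinearGroup.transvection zero_ne_one a =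
      quarterTurn R * SpecialLinearGroup.transvection one_ne_zero (-a) * (quarterTurn R)⁻¹ := by
  rw [eq_mul_inv_iff_mul_eq]
  ext i j
  fin_cases i <;> fin_cases j <;>
    simp [coe_quarterTurn, SpecialLinearGroup.transvection_coe, mul_apply, Fin.sum_univ_two]

theorem closure_quarterTurn_shear (p : ℕ) [Fact p.Prime] :
    Subgroup.closure {quarterTurn (ZMod p), shear (ZMod p)} = ⊤ := by
  set G := Subgroup.closure {quarterTurn (ZMod p), shear (ZMod p)}
  have quarterTurn_mem : quarterTurn (ZMod p) ∈ G := Subgroup.subset_closure (by simp)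
  have lower_mem (a : ZMod p) : SpecialLinearGroup.transvection one_ne_zero a ∈ G := by
    rw [transvection_eq_shear_pow]
    exact pow_mem (Subgroup.subset_closure (by simp)) _
  have upper_mem (a : ZMod p) : SpecialLinearGroup.transvection zero_ne_one a ∈ G := by
    rw [transvection_eq_conj_quarterTurn]
    exact mul_mem (mul_mem quarterTurn_mem (lower_mem _)) (inv_mem quarterTurn_mem)
  refine eq_top_iff.2 fun A _ => SL2.transvection_induction (· ∈ G) (fun i j hij a => ?_)
    (fun _ _ => mul_mem) A
  fin_cases i <;> fin_cases j
  · exact absurd rfl hij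
  · exact upper_mem a
  · exact lower_mem a
  · exact absurd rfl hij

end SpecialLinear

section HeisenbergGroup

/-- The Heisenberg group of `R`: a central extension of the phase space `R²` by `R`, in the
polarized coordinates in which `⟨k, ![x, y]⟩` is the `k`-th phase times the shift by `x` times
the clock of frequency `y`. -/
@[ext]
structure Heisenberg (R : Type*) where
  /-- The central coordinate. -/
  phase : R
  /-- The point of phase space: position first, frequency second. -/
  vec : Fin 2 → R

namespace Heisenberg

variable {R : Type*} [CommRing R]

instance : One (Heisenberg R) := ⟨⟨0, 0⟩⟩

instance : Mul (Heisenberg R) :=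
  ⟨fun g h => ⟨g.phase + h.phase + g.vec 1 * h.vec 0, g.vec + h.vec⟩⟩

instance : Inv (Heisenberg R) := ⟨fun g => ⟨-g.phase + g.vec 1 * g.vec 0, -g.vec⟩⟩

theorem one_def : (1 : Heisenberg R) = ⟨0, 0⟩ := rfl

theorem mul_def (g h : Heisenberg R) :
    g * h = ⟨g.phase + h.phase + g.vec 1 * h.vec 0, g.vec + h.vec⟩ := rfl

theorem inv_def (g : Heisenberg R) : g⁻¹ = ⟨-g.phase + g.vec 1 * g.vec 0, -g.vec⟩ := rfl

instance : Group (Heisenberg R) :=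
  Group.ofLeftAxioms
    (fun g h k => Heisenberg.ext (by simp only [mul_def, Pi.add_apply]; ring)
      (add_assoc g.vec h.vec k.vec))
    (fun g => by simp [mul_def, one_def])
    (fun g => by simp [mul_def, inv_def, one_def])

/-- The shift by one position. -/
def shift : Heisenberg R := ⟨0, ![1, 0]⟩

/-- The clock of frequency one. -/
def clock : Heisenberg R := ⟨0, ![0, 1]⟩

theorem mul_eq_mk_mul (g : Heisenberg R) (k : R) (v : Fin 2 → R) :
    g * ⟨k, v⟩ = ⟨k + (g.vec 1 * v 0 - g.vec 0 * v 1), v⟩ * g := by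
  refine Heisenberg.ext ?_ (add_comm g.vec v)
  simp only [mul_def]
  ring

theorem clock_mul_shift : clock * shift = (⟨1, 0⟩ : Heisenberg R) * (shift * clock) := by
  simp [clock, shift, mul_def]

theorem mk_zero_pow (k : R) (m : ℕ) : (⟨k, 0⟩ : Heisenberg R) ^ m = ⟨m * k, 0⟩ := by
  induction m with
  | zero => simp [one_def]
  | succ m ih => simp [pow_succ, ih, mul_def, add_mul]

theorem shift_pow (m : ℕ) : (shift : Heisenberg R) ^ m = ⟨0, ![m, 0]⟩ := by
  induction m with
  | zero => simp [one_def, funext_iff, Fin.forall_fin_two]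
  | succ m ih => rw [pow_succ, ih]; simp [shift, mul_def]

theorem clock_pow (m : ℕ) : (clock : Heisenberg R) ^ m = ⟨0, ![0, m]⟩ := by
  induction m with
  | zero => simp [one_def, funext_iff, Fin.forall_fin_two]
  | succ m ih => rw [pow_succ, ih]; simp [clock, mul_def]

theorem closure_shift_clock (n : ℕ) [NeZero n] :
    Subgroup.closure {shift, (clock : Heisenberg (ZMod n))} = ⊤ := by
  set G := Subgroup.closure {shift, (clock : Heisenberg (ZMod n))}
  have shift_mem : shift ∈ G := Subgroup.subset_closure (by simp)
  have clock_mem : clock ∈ G := Subgroup.subset_closure (by simp)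
  have phase_mem : ⟨1, 0⟩ ∈ G := by
    have phase_eq : ⟨1, 0⟩ = clock * shift * (shift * (clock : Heisenberg (ZMod n)))⁻¹ :=
      eq_mul_inv_of_mul_eq clock_mul_shift.symm
    rw [phase_eq]
    exact mul_mem (mul_mem clock_mem shift_mem) (inv_mem (mul_mem shift_mem clock_mem))
  refine eq_top_iff.2 fun g _ => ?_
  have factorization : g = ⟨1, 0⟩ ^ g.phase.val *
      (shift ^ (g.vec 0).val * clock ^ (g.vec 1).val) := by
    rw [mk_zero_pow, shift_pow, clock_pow]
    ext i
    · simp [mul_def]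
    · fin_cases i <;> simp [mul_def]
  rw [factorization]
  exact mul_mem (pow_mem phase_mem _) (mul_mem (pow_mem shift_mem _) (pow_mem clock_mem _))

theorem card_eq (R : Type*) : Nat.card (Heisenberg R) = Nat.card R ^ 3 := by
  have coordinates : Heisenberg R ≃ R × (Fin 2 → R) :=
    ⟨fun g => (g.phase, g.vec), fun x => ⟨x.1, x.2⟩, fun _ => rfl, fun _ => rfl⟩
  rw [Nat.card_congr coordinates, Nat.card_prod, Nat.card_fun, Nat.card_fin]
  ring

end Heisenberg

end HeisenbergGroup

section Weyl

variable {R K : Type*} [CommRing R] [DecidableEq R] [Field K] (χ : AddChar R K)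

/-- The Weyl operator of `⟨k, ![x, y]⟩` sends the basis vector `e j` to `χ (k + y * j) • e (j + x)`;
the qudit Pauli operators are the Weyl operators of the shift and of the clock. -/
def weylMatrix (g : Heisenberg R) : Matrix R R K :=
  of fun i j => if i = j + g.vec 0 then χ (g.phase + g.vec 1 * j) else 0

variable {χ}

theorem weylMatrix_one : weylMatrix χ 1 = 1 := by
  ext i j
  simp [weylMatrix, Heisenberg.one_def, one_apply]

variable [Fintype R]

theorem mul_weylMatrix_apply (U : Matrix R R K) (g : Heisenberg R) (i j : R) :
    (U * weylMatrix χ g) i j = U i (j + g.vec 0) * χ (g.phase + g.vec 1 * j) := by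
  simp [weylMatrix, mul_apply]

theorem weylMatrix_mul_apply (U : Matrix R R K) (g : Heisenberg R) (i j : R) :
    (weylMatrix χ g * U) i j =
      χ (g.phase + g.vec 1 * (i - g.vec 0)) * U (i - g.vec 0) j := by
  simp [weylMatrix, mul_apply, ← sub_eq_iff_eq_add]

theorem weylMatrix_mul (g h : Heisenberg R) :
    weylMatrix χ (g * h) = weylMatrix χ g * weylMatrix χ h := by
  ext i j
  rw [mul_weylMatrix_apply]
  simp only [weylMatrix, of_apply, Heisenberg.mul_def, Pi.add_apply, ite_mul, zero_mul,
    ← AddChar.map_add_eq_mul]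
  congr 2 <;> ring

variable (χ) in
/-- The Weyl representation of the Heisenberg group with central character `χ`. -/
def weyl : Heisenberg R →* GL R K :=
  MonoidHom.toHomUnits ⟨⟨weylMatrix χ, weylMatrix_one⟩, weylMatrix_mul⟩

theorem coe_weyl (g : Heisenberg R) : (weyl χ g : Matrix R R K) = weylMatrix χ g := rfl

theorem weyl_injective (hχ : Function.Injective χ) : Function.Injective (weyl (K := K) χ) := by
  refine (injective_iff_map_eq_one _).2 fun g hg => ?_
  have entry (i j : R) : weylMatrix χ g i j = (1 : Matrix R R K) i j := by
    rw [← coe_weyl, hg, Units.val_one]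
  have position : g.vec 0 = 0 := by
    by_contra hne
    simpa [weylMatrix, one_apply, hne, (AddChar.val_isUnit χ _).ne_zero] using entry (g.vec 0) 0
  have phase : g.phase = 0 := hχ (by simpa [weylMatrix, position] using entry 0 0)
  have frequency : g.vec 1 = 0 := hχ (by simpa [weylMatrix, position, phase] using entry 1 1)
  refine Heisenberg.ext phase (funext fun i => ?_)
  fin_cases i
  · exact position
  · exact frequency

theorem exists_eq_smul_one_of_commute_weylMatrix (hχ : χ.IsPrimitive) {U : Matrix R R K}
    (hU : ∀ g, Commute U (weylMatrix χ g)) : ∃ c : K, U = c • 1 := by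
  have entry (g : Heisenberg R) (i j : R) : U i (j + g.vec 0) * χ (g.phase + g.vec 1 * j) =
      χ (g.phase + g.vec 1 * (i - g.vec 0)) * U (i - g.vec 0) j := by
    rw [← mul_weylMatrix_apply, ← weylMatrix_mul_apply, (hU g).eq]
  have offDiagonal {i j : R} (hij : i ≠ j) : U i j = 0 := by
    by_contra hne
    refine hχ (sub_ne_zero.2 hij) (DFunLike.ext _ _ fun y => ?_)
    have same_char : χ (y * j) = χ (y * i) := by
      simpa [mul_comm _ (U i j), hne] using entry ⟨0, ![0, y]⟩ i j
    rw [AddChar.mulShift_apply, mul_comm, mul_sub, AddChar.map_sub_eq_div, same_char,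
      AddChar.one_apply, div_self (AddChar.val_isUnit χ _).ne_zero]
  have diagonal (i : R) : U i i = U 0 0 := by simpa using entry ⟨0, ![i, 0]⟩ i 0
  refine ⟨U 0 0, ext fun i j => ?_⟩
  rcases eq_or_ne i j with rfl | hij
  · simp [diagonal i]
  · simp [hij, offDiagonal hij]

end Weyl

section CliffordPairs

variable {R K : Type*} [CommRing R] [Fintype R] [DecidableEq R] [Field K] (χ : AddChar R K)

/-- The pairs `(U, A)` such that conjugation by `U` moves the Weyl operators over a point `v` of
phase space to those over `A v`, up to a phase depending only on `v`. -/
def cliffordPairs : Subgroup (GL R K × SL(2, R)) where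
  carrier := {u | ∀ v, ∃ c, ∀ k, SemiconjBy u.1 (weyl χ ⟨k, v⟩)
    (weyl χ ⟨k + c, SpecialLinearGroup.toLin' u.2 v⟩)}
  one_mem' v := ⟨0, fun k => by simp⟩
  mul_mem' {u w} hu hw v := by
    obtain ⟨c, hc⟩ := hw v
    obtain ⟨d, hd⟩ := hu (SpecialLinearGroup.toLin' w.2 v)
    refine ⟨c + d, fun k => ?_⟩
    rw [Prod.fst_mul, Prod.snd_mul, map_mul, LinearEquiv.mul_apply, ← add_assoc]
    exact (hd (k + c)).mul_left (hc k)
  inv_mem' {u} hu v := by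
    obtain ⟨c, hc⟩ := hu (SpecialLinearGroup.toLin' u.2⁻¹ v)
    rw [← LinearEquiv.mul_apply, ← map_mul, mul_inv_cancel, map_one, LinearEquiv.coe_one,
      id_eq] at hc
    refine ⟨-c, fun k => SemiconjBy.inv_symm_left ?_⟩
    have moves_back := hc (k + -c)
    rwa [neg_add_cancel_right] at moves_back

variable {χ}

theorem mem_cliffordPairs {U : GL R K} {A : SL(2, R)} :
    (U, A) ∈ cliffordPairs χ ↔ ∀ v, ∃ c, ∀ k,
      SemiconjBy U (weyl χ ⟨k, v⟩) (weyl χ ⟨k + c, SpecialLinearGroup.toLin' A v⟩) :=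
  Iff.rfl

theorem eq_one_of_one_mk_mem_cliffordPairs (hχ : Function.Injective χ) {A : SL(2, R)}
    (hA : (1, A) ∈ cliffordPairs (K := K) χ) : A = 1 := by
  refine SpecialLinearGroup.toLin'_injective (LinearEquiv.ext fun v => ?_)
  obtain ⟨c, hc⟩ := mem_cliffordPairs.1 hA v
  have same_weyl := hc 0
  rw [SemiconjBy, one_mul, mul_one] at same_weyl
  rw [map_one, LinearEquiv.coe_one, id_eq]
  exact (congrArg Heisenberg.vec (weyl_injective hχ same_weyl)).symm

theorem exists_eq_smul_weyl_of_mk_one_mem_cliffordPairs {n : ℕ} [NeZero n] {χ : AddChar (ZMod n) K}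
    (hχ : χ.IsPrimitive) {U : GL (ZMod n) K} (hU : (U, 1) ∈ cliffordPairs χ) :
    ∃ (g : Heisenberg (ZMod n)) (c : K), (U : Matrix (ZMod n) (ZMod n) K) = c • weylMatrix χ g := by
  have moves (v : Fin 2 → ZMod n) : ∃ c, SemiconjBy U (weyl χ ⟨0, v⟩) (weyl χ ⟨c, v⟩) := by
    obtain ⟨c, hc⟩ := mem_cliffordPairs.1 hU v
    exact ⟨c, by simpa using hc 0⟩
  obtain ⟨a, ha⟩ := moves ![1, 0]
  obtain ⟨b, hb⟩ := moves ![0, 1]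
  let g : Heisenberg (ZMod n) := ⟨0, ![-b, a]⟩
  have shift_moves : SemiconjBy g Heisenberg.shift ⟨a, ![1, 0]⟩ :=
    (Heisenberg.mul_eq_mk_mul g 0 _).trans (by simp [g])
  have clock_moves : SemiconjBy g Heisenberg.clock ⟨b, ![0, 1]⟩ :=
    (Heisenberg.mul_eq_mk_mul g 0 _).trans (by simp [g])
  have commutes : ⊤ ≤ (Subgroup.centralizer {(weyl χ g)⁻¹ * U}).comap (weyl χ) := by
    rw [← Heisenberg.closure_shift_clock n, Subgroup.closure_le, Set.pair_subset_iff]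
    exact ⟨Subgroup.mem_centralizer_singleton_iff.2
        ((shift_moves.map (weyl χ)).inv_symm_left.mul_left ha).symm,
      Subgroup.mem_centralizer_singleton_iff.2
        ((clock_moves.map (weyl χ)).inv_symm_left.mul_left hb).symm⟩
  obtain ⟨c, hc⟩ := exists_eq_smul_one_of_commute_weylMatrix hχ
    (U := ((weyl χ g)⁻¹ * U : GL (ZMod n) K)) fun x => congrArg Units.val
      (Subgroup.mem_centralizer_singleton_iff.1 (commutes (Subgroup.mem_top x))).symm
  refine ⟨g, c, ?_⟩
  rw [← mul_inv_cancel_left (weyl χ g) U, Units.val_mul, hc, coe_weyl, Matrix.mul_smul, mul_one]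

end CliffordPairs

section FourierTransform

variable {R K : Type*} [CommRing R] [Field K]

/-- The matrix of the discrete Fourier transform, without its normalizing factor. -/
def fourierMatrix (χ : AddChar R K) : Matrix R R K := of fun i j => χ (i * j)

variable [DecidableEq R]

variable (R K) in
/-- The permutation matrix of `j ↦ -j`, to which the Fourier matrix squares up to a scalar. -/
def parityMatrix : Matrix R R K := of fun i j => if i = -j then 1 else 0

variable [Fintype R] {χ : AddChar R K}

theorem fourierMatrix_mul_weylMatrix (k : R) (v : Fin 2 → R) :
    fourierMatrix χ * weylMatrix χ ⟨k, v⟩ =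
      weylMatrix χ ⟨k + -(v 0 * v 1), ![-v 1, v 0]⟩ * fourierMatrix χ := by
  ext i j
  rw [mul_weylMatrix_apply, weylMatrix_mul_apply]
  simp only [fourierMatrix, of_apply, cons_val_zero, cons_val_one, ← AddChar.map_add_eq_mul]
  congr 1
  ring

theorem mk_quarterTurn_mem_cliffordPairs {h : GL R K} {a : K}
    (hh : (h : Matrix R R K) = a • fourierMatrix χ) : (h, quarterTurn R) ∈ cliffordPairs χ := by
  refine mem_cliffordPairs.2 fun v => ⟨-(v 0 * v 1), fun k => Units.ext ?_⟩
  rw [toLin'_quarterTurn, Units.val_mul, Units.val_mul, hh, coe_weyl, coe_weyl, Matrix.smul_mul,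
    fourierMatrix_mul_weylMatrix, Matrix.mul_smul]

theorem fourier_mul_weyl_shift {h : GL R K} {a : K}
    (hh : (h : Matrix R R K) = a • fourierMatrix χ) :
    h * weyl χ Heisenberg.shift = weyl χ Heisenberg.clock * h := by
  refine Units.ext ?_
  rw [Units.val_mul, Units.val_mul, hh, coe_weyl, coe_weyl, Heisenberg.shift, Matrix.smul_mul,
    fourierMatrix_mul_weylMatrix, Matrix.mul_smul]
  simp [Heisenberg.clock]

theorem fourierMatrix_mul_self (hχ : χ.IsPrimitive) :
    fourierMatrix χ * fourierMatrix χ = (Fintype.card R : K) • parityMatrix R K := by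
  ext i j
  have entry (x : R) : χ (i * x) * χ (x * j) = χ (x * (i + j)) := by
    rw [← AddChar.map_add_eq_mul]
    congr 1
    ring
  simp [fourierMatrix, parityMatrix, mul_apply, entry, AddChar.sum_mulShift _ hχ,
    add_eq_zero_iff_eq_neg]

end FourierTransform

section QuadraticPhase

variable {F K : Type*} [Field F] [DecidableEq F] [Field K]

/-- The diagonal matrix of the quadratic phase `j ↦ χ (j (j - 1) / 2)`. Consecutive entries have
quotient `χ j`, so conjugation by it turns the shift into the shift times the clock. -/
def quadraticPhaseMatrix (χ : AddChar F K) : Matrix F F K := diagonal fun j => χ (j * (j - 1) / 2)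

variable [Fintype F] {χ : AddChar F K}

theorem quadraticPhaseMatrix_mul_weylMatrix (hF : (2 : F) ≠ 0) (k : F) (v : Fin 2 → F) :
    quadraticPhaseMatrix χ * weylMatrix χ ⟨k, v⟩ =
      weylMatrix χ ⟨k + v 0 * (v 0 - 1) / 2, ![v 0, v 1 + v 0]⟩ * quadraticPhaseMatrix χ := by
  ext i j
  rw [quadraticPhaseMatrix, diagonal_mul, mul_diagonal]
  by_cases hij : i = j + v 0
  · simp only [weylMatrix, of_apply, cons_val_zero, cons_val_one, hij, if_true,
      ← AddChar.map_add_eq_mul]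
    congr 1
    field_simp
    ring
  · simp [weylMatrix, hij]

theorem mk_shear_mem_cliffordPairs (hF : (2 : F) ≠ 0) {s : GL F K} {b : K}
    (hs : (s : Matrix F F K) = b • quadraticPhaseMatrix χ) :
    (s, shear F) ∈ cliffordPairs χ := by
  refine mem_cliffordPairs.2 fun v => ⟨v 0 * (v 0 - 1) / 2, fun k => Units.ext ?_⟩
  rw [toLin'_shear, Units.val_mul, Units.val_mul, hs, coe_weyl, coe_weyl, Matrix.smul_mul,
    quadraticPhaseMatrix_mul_weylMatrix hF, Matrix.mul_smul]

theorem parityMatrix_mul_quadraticPhaseMatrix (hF : (2 : F) ≠ 0) :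
    parityMatrix F K * quadraticPhaseMatrix χ =
      weylMatrix χ Heisenberg.clock * (quadraticPhaseMatrix χ * parityMatrix F K) := by
  ext i j
  rw [weylMatrix_mul_apply, quadraticPhaseMatrix, mul_diagonal, diagonal_mul]
  by_cases hij : i = -j
  · simp only [parityMatrix, Heisenberg.clock, of_apply, cons_val_zero, cons_val_one, hij, sub_zero,
      if_true, one_mul, mul_one, ← AddChar.map_add_eq_mul]
    congr 1
    field_simp
    ring
  · simp [parityMatrix, Heisenberg.clock, hij]

theorem fourier_sq_mul_quadraticPhase (hχ : χ.IsPrimitive) (hF : (2 : F) ≠ 0)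
    {h s : GL F K} {a b : K} (hh : (h : Matrix F F K) = a • fourierMatrix χ)
    (hs : (s : Matrix F F K) = b • quadraticPhaseMatrix χ) :
    h ^ 2 * s = weyl χ Heisenberg.clock * (s * h ^ 2) := by
  have h_sq : (↑(h ^ 2) : Matrix F F K) = (a * a * Fintype.card F) • parityMatrix F K := by
    rw [sq, Units.val_mul, hh, smul_mul_smul_comm, fourierMatrix_mul_self hχ, smul_smul]
  refine Units.ext ?_
  simp only [Units.val_mul, h_sq, hs, coe_weyl, smul_mul_smul_comm, Matrix.mul_smul,
    parityMatrix_mul_quadraticPhaseMatrix hF, mul_comm b]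

end QuadraticPhase

section ZModCharacter

variable {n : ℕ} [NeZero n] {K : Type*} [Field K] {χ : AddChar (ZMod n) K}

theorem injective_of_isPrimitive (hχ : χ.IsPrimitive) : Function.Injective χ :=
  (injective_iff_map_eq_one χ.toMonoidHom).2 fun k hk => (hχ.zmod_char_eq_one_iff n k).1 hk

theorem isPrimitiveRoot_apply_one (hχ : χ.IsPrimitive) : IsPrimitiveRoot (χ 1) n := by
  refine ⟨?_, fun m hm => ?_⟩
  · rw [← AddChar.map_nsmul_eq_pow, nsmul_one, ZMod.natCast_self, AddChar.map_zero_eq_one]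
  · rw [← AddChar.map_nsmul_eq_pow, nsmul_one, hχ.zmod_char_eq_one_iff] at hm
    exact (ZMod.natCast_eq_zero_iff m n).1 hm

theorem mem_range_weyl_of_eq_smul (hχ : χ.IsPrimitive) {U : GL (ZMod n) K} {c : K}
    {g : Heisenberg (ZMod n)} (hU : (U : Matrix (ZMod n) (ZMod n) K) = c • weylMatrix χ g)
    (det_eq : U.det = (weyl χ g).det) : U ∈ (weyl χ).range := by
  have c_pow : c ^ n = 1 := by
    refine mul_right_cancel₀ (weyl χ g).det.ne_zero ?_
    rw [one_mul, GeneralLinearGroup.val_det_apply, coe_weyl]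
    calc c ^ n * (weylMatrix χ g).det = (c • weylMatrix χ g).det := by rw [det_smul, ZMod.card]
      _ = (weylMatrix χ g).det := by rw [← hU]; exact congrArg Units.val det_eq
  obtain ⟨m, -, hm⟩ := (isPrimitiveRoot_apply_one hχ).eq_pow_of_pow_eq_one c_pow
  refine ⟨⟨m, 0⟩ * g, Units.ext (ext fun i j => ?_)⟩
  rw [hU, coe_weyl, weylMatrix_mul, weylMatrix_mul_apply, Matrix.smul_apply, ← hm,
    ← AddChar.map_nsmul_eq_pow, nsmul_one]
  simp

end ZModCharacter

section Clifford

variable {p : ℕ} [Fact p.Prime] {K : Type*} [Field K]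

/-- The graph of the action of the Clifford group on phase space, where the Fourier gate `h` acts as
the quarter turn and the phase gate `s` as the shear. -/
def cliffordGraph (h s : GL (ZMod p) K) : Subgroup (GL (ZMod p) K × SL(2, ZMod p)) :=
  Subgroup.closure {(h, quarterTurn (ZMod p)), (s, shear (ZMod p))}

variable {χ : AddChar (ZMod p) K} {h s : GL (ZMod p) K} {a b : K}

theorem map_fst_cliffordGraph :
    (cliffordGraph h s).map (MonoidHom.fst _ _) = Subgroup.closure {h, s} := by
  rw [cliffordGraph, MonoidHom.map_closure, Set.image_pair]
  rfl

theorem map_snd_cliffordGraph : (cliffordGraph h s).map (MonoidHom.snd _ _) = ⊤ := by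
  rw [cliffordGraph, MonoidHom.map_closure, Set.image_pair, ← closure_quarterTurn_shear]
  rfl

theorem det_eq_one_of_mem_cliffordGraph (det_h : h.det = 1) (det_s : s.det = 1)
    {u : GL (ZMod p) K × SL(2, ZMod p)} (hu : u ∈ cliffordGraph h s) : u.1.det = 1 := by
  have le_ker : cliffordGraph h s ≤ (GeneralLinearGroup.det.comp (MonoidHom.fst _ _)).ker :=
    (Subgroup.closure_le _).2 (Set.pair_subset_iff.2 ⟨det_h, det_s⟩)
  exact le_ker hu

theorem cliffordGraph_le_cliffordPairs (hp : p ≠ 2)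
    (hh : (h : Matrix (ZMod p) (ZMod p) K) = a • fourierMatrix χ)
    (hs : (s : Matrix (ZMod p) (ZMod p) K) = b • quadraticPhaseMatrix χ) :
    cliffordGraph h s ≤ cliffordPairs χ := by
  have two_ne_zero : (2 : ZMod p) ≠ 0 := Ring.two_ne_zero (by rwa [ZMod.ringChar_zmod_n])
  exact (Subgroup.closure_le _).2 (Set.pair_subset_iff.2
    ⟨mk_quarterTurn_mem_cliffordPairs hh, mk_shear_mem_cliffordPairs two_ne_zero hs⟩)

theorem mk_weyl_one_mem_cliffordGraph (hp : p ≠ 2) (hχ : χ.IsPrimitive)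
    (hh : (h : Matrix (ZMod p) (ZMod p) K) = a • fourierMatrix χ)
    (hs : (s : Matrix (ZMod p) (ZMod p) K) = b • quadraticPhaseMatrix χ) (g : Heisenberg (ZMod p)) :
    (weyl χ g, 1) ∈ cliffordGraph h s := by
  have two_ne_zero : (2 : ZMod p) ≠ 0 := Ring.two_ne_zero (by rwa [ZMod.ringChar_zmod_n])
  set x : GL (ZMod p) K × SL(2, ZMod p) := (h, quarterTurn (ZMod p)) with hx
  set y : GL (ZMod p) K × SL(2, ZMod p) := (s, shear (ZMod p)) with hy
  have hx_mem : x ∈ cliffordGraph h s := Subgroup.subset_closure (by simp [hx])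
  have hy_mem : y ∈ cliffordGraph h s := Subgroup.subset_closure (by simp [hy])
  have clock_eq : (weyl χ Heisenberg.clock, 1) = x ^ 2 * y * (y * x ^ 2)⁻¹ := by
    refine Prod.ext ?_ ?_
    · exact eq_mul_inv_of_mul_eq (fourier_sq_mul_quadraticPhase hχ two_ne_zero hh hs).symm
    · refine eq_mul_inv_of_mul_eq ?_
      simp [hx, hy, quarterTurn_sq]
  have shift_eq : (weyl χ Heisenberg.shift, 1) = x⁻¹ * (weyl χ Heisenberg.clock, 1) * x := by
    refine Prod.ext ?_ (by simp)
    rw [Prod.fst_mul, Prod.fst_mul, mul_assoc]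
    exact eq_inv_mul_of_mul_eq (fourier_mul_weyl_shift hh)
  have clock_mem : (weyl χ Heisenberg.clock, 1) ∈ cliffordGraph h s :=
    clock_eq ▸ mul_mem (mul_mem (pow_mem hx_mem 2) hy_mem)
      (inv_mem (mul_mem hy_mem (pow_mem hx_mem 2)))
  have shift_mem : (weyl χ Heisenberg.shift, 1) ∈ cliffordGraph h s :=
    shift_eq ▸ mul_mem (mul_mem (inv_mem hx_mem) clock_mem) hx_mem
  have le_comap : ⊤ ≤ (cliffordGraph h s).comap ((weyl χ).prod 1) := by
    rw [← Heisenberg.closure_shift_clock p, Subgroup.closure_le, Set.pair_subset_iff]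
    exact ⟨shift_mem, clock_mem⟩
  exact le_comap (Subgroup.mem_top g)

theorem ker_fst_inf_cliffordGraph (hp : p ≠ 2) (hχ : χ.IsPrimitive)
    (hh : (h : Matrix (ZMod p) (ZMod p) K) = a • fourierMatrix χ)
    (hs : (s : Matrix (ZMod p) (ZMod p) K) = b • quadraticPhaseMatrix χ) :
    (MonoidHom.fst _ _).ker ⊓ cliffordGraph h s = ⊥ := by
  rw [eq_bot_iff]
  rintro ⟨U, A⟩ ⟨rfl : U = 1, hA⟩
  exact Prod.ext rfl (eq_one_of_one_mk_mem_cliffordPairs (injective_of_isPrimitive hχ)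
    (cliffordGraph_le_cliffordPairs hp hh hs hA))

theorem ker_snd_inf_cliffordGraph (hp : p ≠ 2) (hχ : χ.IsPrimitive)
    (hh : (h : Matrix (ZMod p) (ZMod p) K) = a • fourierMatrix χ) (det_h : h.det = 1)
    (hs : (s : Matrix (ZMod p) (ZMod p) K) = b • quadraticPhaseMatrix χ) (det_s : s.det = 1) :
    (MonoidHom.snd _ _).ker ⊓ cliffordGraph h s = ((weyl χ).prod 1).range := by
  refine le_antisymm ?_ ?_
  · rintro ⟨U, A⟩ ⟨rfl : A = 1, hU⟩
    obtain ⟨g, c, U_eq⟩ := exists_eq_smul_weyl_of_mk_one_mem_cliffordPairs hχ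
      (cliffordGraph_le_cliffordPairs hp hh hs hU)
    have det_eq : U.det = (weyl χ g).det :=
      (det_eq_one_of_mem_cliffordGraph det_h det_s hU).trans (det_eq_one_of_mem_cliffordGraph
        det_h det_s (mk_weyl_one_mem_cliffordGraph hp hχ hh hs g)).symm
    obtain ⟨g', rfl⟩ := mem_range_weyl_of_eq_smul hχ U_eq det_eq
    exact ⟨g', rfl⟩
  · rintro _ ⟨g, rfl⟩
    exact ⟨rfl, mk_weyl_one_mem_cliffordGraph hp hχ hh hs g⟩

theorem clifford_group_has_order_648_general (hp : p ≠ 2) (hχ : χ.IsPrimitive)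
    (hh : (h : Matrix (ZMod p) (ZMod p) K) = a • fourierMatrix χ) (det_h : h.det = 1)
    (hs : (s : Matrix (ZMod p) (ZMod p) K) = b • quadraticPhaseMatrix χ) (det_s : s.det = 1) :
    Nat.card (Subgroup.closure {h, s}) = p ^ 3 * (p * (p ^ 2 - 1)) := by
  have prod_injective : Function.Injective ((weyl χ).prod (1 : _ →* SL(2, ZMod p))) :=
    fun _ _ hxy => weyl_injective (injective_of_isPrimitive hχ) (congrArg Prod.fst hxy)
  have card_range : Nat.card ((weyl χ).prod (1 : _ →* SL(2, ZMod p))).range = p ^ 3 := by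
    rw [← Nat.card_congr (MonoidHom.ofInjective prod_injective).toEquiv, Heisenberg.card_eq,
      Nat.card_zmod]
  have weyl_le : ((weyl χ).prod 1).range ≤ cliffordGraph h s := by
    rw [← ker_snd_inf_cliffordGraph hp hχ hh det_h hs det_s]
    exact inf_le_right
  calc Nat.card (Subgroup.closure {h, s})
      = Nat.card (cliffordGraph h s) := by
        rw [← map_fst_cliffordGraph, ← Subgroup.relIndex_ker, ← Subgroup.inf_relIndex_right,
          ker_fst_inf_cliffordGraph hp hχ hh hs, Subgroup.relIndex_bot_left]
    _ = p ^ 3 * ((weyl χ).prod 1).range.relIndex (cliffordGraph h s) := by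
        rw [← card_range, ← Subgroup.relIndex_bot_left, ← Subgroup.relIndex_bot_left,
          Subgroup.relIndex_mul_relIndex _ _ _ bot_le weyl_le]
    _ = p ^ 3 * Nat.card SL(2, ZMod p) := by
        rw [← ker_snd_inf_cliffordGraph hp hχ hh det_h hs det_s, Subgroup.inf_relIndex_right,
          Subgroup.relIndex_ker, map_snd_cliffordGraph, Subgroup.card_top]
    _ = p ^ 3 * (p * (p ^ 2 - 1)) := by rw [card_specialLinearGroup_two, ZMod.card]

end Clifford

section Qutrit

theorem omega_sq_add_omega_add_one : ω ^ 2 + ω + 1 = 0 :=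
  mul_left_cancel₀ (sub_ne_zero.2 omega_ne_one) (by linear_combination omega_cube)

theorem I_mul_sqrt_three : I * (Real.sqrt 3 : ℂ) = 2 * ω + 1 := by
  have sqrt_sq : (Real.sqrt 3 : ℂ) ^ 2 = 3 := by
    rw [← ofReal_pow, Real.sq_sqrt zero_le_three, ofReal_ofNat]
  have sq_eq : (I * (Real.sqrt 3 : ℂ)) ^ 2 = (2 * ω + 1) ^ 2 := by
    rw [mul_pow, I_sq, sqrt_sq]
    linear_combination -4 * omega_sq_add_omega_add_one
  refine (sq_eq_sq_iff_eq_or_eq_neg.1 sq_eq).resolve_right fun h => ?_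
  have im_eq : Real.sqrt 3 = -(2 * ω.im) := by simpa using congrArg im h
  linarith [Real.sqrt_nonneg 3, omega_im_pos]

theorem zeta_cube : ζ ^ 3 = ω := by
  rw [ζ, ω, ← Complex.exp_nat_mul]
  congr 1
  push_cast
  ring

theorem det_Hg : Hg.det = 1 := by
  refine Units.ext ?_
  change Hmat.det = 1
  have ne_zero : I * (Real.sqrt 3 : ℂ) ≠ 0 := by simp
  have det_fourier : det !![1, 1, 1; 1, ω, ω ^ 2; 1, ω ^ 2, ω] = (2 * ω + 1) ^ 3 := by
    simp only [det_fin_three, of_apply, cons_val]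
    linear_combination -(ω ^ 2 + 7 * ω + 1) * omega_sq_add_omega_add_one
  rw [Hmat, det_smul, Fintype.card_fin, det_fourier, ← I_mul_sqrt_three, inv_pow,
    inv_mul_cancel₀ (pow_ne_zero 3 ne_zero)]

theorem det_Sg : Sg.det = 1 := by
  refine Units.ext ?_
  change Smat.det = 1
  have det_phase : det !![1, 0, 0; 0, 1, 0; 0, 0, ω] = ω := by simp [det_fin_three]
  rw [Smat, det_smul, Fintype.card_fin, det_phase]
  calc (ζ ^ 8) ^ 3 * ω = (ζ ^ 3) ^ 8 * ω := by ring
    _ = (ω ^ 3) ^ 3 := by rw [zeta_cube]; ring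
    _ = 1 := by rw [omega_cube, one_pow]

/-- The additive character `k ↦ ω ^ k` of `ZMod 3`, for which the Fourier and quadratic phase
matrices are those of the gates `H` and `S`. -/
def omegaChar : AddChar (ZMod 3) ℂ := AddChar.zmodChar 3 omega_cube

theorem omegaChar_isPrimitive : omegaChar.IsPrimitive :=
  AddChar.zmodChar_primitive_of_primitive_root 3 (Complex.isPrimitiveRoot_exp 3 three_ne_zero)

theorem omegaChar_apply (k : ZMod 3) : omegaChar k = ω ^ k.val :=
  AddChar.zmodChar_apply omega_cube k

theorem Hmat_eq_smul_fourierMatrix :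
    Hmat = (I * (Real.sqrt 3 : ℂ))⁻¹ • fourierMatrix omegaChar := by
  have entries : !![1, 1, 1; 1, ω, ω ^ 2; 1, ω ^ 2, ω] =
      !![ω ^ 0, ω ^ 0, ω ^ 0; ω ^ 0, ω ^ 1, ω ^ 2; ω ^ 0, ω ^ 2, ω ^ 1] := by
    rw [pow_zero, pow_one]
  rw [Hmat, entries]
  congr 1
  ext i j
  refine Eq.trans ?_ (omegaChar_apply _).symm
  fin_cases i <;> fin_cases j <;> rfl

theorem Smat_eq_smul_quadraticPhaseMatrix : Smat = ζ ^ 8 • quadraticPhaseMatrix omegaChar := by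
  have half (k : ZMod 3) : k / 2 = 2 * k := (div_eq_iff (by decide)).2 (by revert k; decide)
  have phases : (fun j => omegaChar (j * (j - 1) / 2)) = ![1, 1, ω] := by
    rw [← pow_zero ω, ← pow_one ω]
    funext j
    rw [omegaChar_apply, half]
    fin_cases j <;> rfl
  rw [Smat, quadraticPhaseMatrix, phases]
  congr 1
  ext i j
  fin_cases i <;> fin_cases j <;> rfl

end Qutrit

/-- The Clifford group 𝒞, i.e., the subgroup of GL(3,ℂ) generated by
H and S, is a finite group of order 648. -/
theorem clifford_group_has_order_648 :
    (Cliff : Set (GL (Fin 3) ℂ)).Finite ∧ Nat.card Cliff = 648 := by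
  have card_eq : Nat.card Cliff = 648 :=
    clifford_group_has_order_648_general (p := 3) (by norm_num) omegaChar_isPrimitive
      Hmat_eq_smul_fourierMatrix det_Hg Smat_eq_smul_quadraticPhaseMatrix det_Sg
  have : Finite Cliff := Nat.finite_of_card_ne_zero (by rw [card_eq]; norm_num)
  exact ⟨Set.toFinite _, card_eq⟩

end
end

section
/- For every diagonal 3×3 unitary matrix D, the adjoint representation D̂ is symplectic: D̂ᵀ·Ω·D̂ = Ω, where Ω is the 8×8 block matrix [[0, I₄],[−I₄, 0]]. -/
open Matrix Complex

noncomputable section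

/-- The 8×8 symplectic form Ω = [[0, I₄],[−I₄, 0]]. -/
def Ωm : Matrix (Fin 8) (Fin 8) ℝ :=
  Matrix.of fun i j =>
    if i.val + 4 = j.val then 1 else if j.val + 4 = i.val then -1 else 0

/-!
Conjugating by a diagonal unitary `diag(d)` multiplies the `(i, j)` entry of a matrix by
`dᵢ * star dⱼ`, so it fixes the entries `Aᵢᵢ` and the products `Aᵢⱼ * star Bᵢⱼ`. In the coordinates
`A ↦ tr(Qᵢ A)` of Hermitian matrices, the form `Ω` is up to a factor the imaginary part of
`∑ₖ tr(Pₖ A) * star tr(Pₖ B)`, where `P` runs over the Paulis `Z, X, XZ, XZ²`. The `Z` term only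
sees diagonals, while `m ↦ tr(X Zᵐ A)` is the discrete Fourier transform of the cyclic
superdiagonal of `A`, so by Parseval the other three terms add up to
`3 ∑ⱼ Aⱼ,ⱼ₊₁ * star Bⱼ,ⱼ₊₁`. Hence the form is invariant under the conjugation, and its matrix in
the orthonormal family `Q` is `Ω`.
-/

section Fourier

variable {n : ℕ} {η : ℂ}

lemma sum_pow_mul_star_pow (hη : IsPrimitiveRoot η n) (i j : Fin n) :
    ∑ m : Fin n, η ^ (m * i : ℕ) * star (η ^ (m * j : ℕ)) = if i = j then (n : ℂ) else 0 := by
  have hn : n ≠ 0 := i.pos.ne'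
  have hstar : star η = η⁻¹ := (inv_eq_conj (hη.norm'_eq_one hn)).symm
  have hratio (m : Fin n) :
      η ^ (m * i : ℕ) * star (η ^ (m * j : ℕ)) = (η ^ (i : ℕ) / η ^ (j : ℕ)) ^ (m : ℕ) := by
    rw [star_pow, hstar, div_pow, ← pow_mul', ← pow_mul', inv_pow, div_eq_mul_inv]
  simp only [hratio, Fin.sum_univ_eq_sum_range (fun m => (η ^ (i : ℕ) / η ^ (j : ℕ)) ^ m)]
  split_ifs with hij
  · simp [hij, hη.ne_zero hn]
  · have hne : η ^ (i : ℕ) / η ^ (j : ℕ) ≠ 1 := fun h =>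
      hij (Fin.ext (hη.pow_inj i.2 j.2 (eq_of_div_eq_one h)))
    rw [geom_sum_eq hne, div_pow, ← pow_mul', ← pow_mul', pow_mul, pow_mul, hη.pow_eq_one]
    simp

lemma sum_fourier_mul_star_fourier (hη : IsPrimitiveRoot η n) (a b : Fin n → ℂ) :
    ∑ m : Fin n, (∑ j : Fin n, η ^ (m * j : ℕ) * a j) * star (∑ j : Fin n, η ^ (m * j : ℕ) * b j) =
      n * ∑ j, a j * star (b j) := by
  calc ∑ m : Fin n, (∑ j : Fin n, η ^ (m * j : ℕ) * a j) * star (∑ j : Fin n, η ^ (m * j : ℕ) * b j)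
      = ∑ m : Fin n, ∑ i : Fin n, ∑ j : Fin n,
          a i * star (b j) * (η ^ (m * i : ℕ) * star (η ^ (m * j : ℕ))) := by
        refine Finset.sum_congr rfl fun m _ => ?_
        rw [star_sum, Finset.sum_mul_sum]
        refine Finset.sum_congr rfl fun i _ => Finset.sum_congr rfl fun j _ => ?_
        rw [star_mul']
        ring
    _ = ∑ i : Fin n, ∑ j : Fin n,
          a i * star (b j) * ∑ m : Fin n, η ^ (m * i : ℕ) * star (η ^ (m * j : ℕ)) := by
        rw [Finset.sum_comm]
        simp only [Finset.mul_sum]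
        exact Finset.sum_congr rfl fun i _ => Finset.sum_comm
    _ = n * ∑ j, a j * star (b j) := by
        simp only [sum_pow_mul_star_pow hη, mul_ite, mul_zero, Finset.sum_ite_eq, Finset.mem_univ,
          if_true, Finset.sum_mul, mul_comm (n : ℂ)]

end Fourier

lemma trace_conjTranspose_mul_of_isHermitian {n R : Type*} [Fintype n] [CommRing R] [StarRing R]
    {A : Matrix n n R} (hA : A.IsHermitian) (P : Matrix n n R) :
    trace (Pᴴ * A) = star (trace (P * A)) := by
  rw [← trace_conjTranspose, conjTranspose_mul, hA.eq, trace_mul_comm]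

section Conjugation

variable {n : Type*} [Fintype n] [DecidableEq n] {R : Type*} [CommRing R] [StarRing R]

lemma diagonal_mul_mul_conjTranspose_apply (d : n → R) (A : Matrix n n R) (i j : n) :
    (diagonal d * A * (diagonal d)ᴴ) i j = d i * A i j * star (d j) := by
  rw [diagonal_conjTranspose, mul_diagonal, diagonal_mul, Pi.star_apply]

lemma mul_star_self_of_diagonal_mem_unitaryGroup {d : n → R}
    (hd : diagonal d ∈ unitaryGroup n R) (i : n) : d i * star (d i) = 1 := by
  have h := congrFun₂ (mem_unitaryGroup_iff.mp hd) i i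
  rwa [star_eq_conjTranspose, diagonal_conjTranspose, diagonal_mul_diagonal, diagonal_apply_eq,
    one_apply_eq] at h

lemma diagonal_conj_apply_self {d : n → R} (hd : diagonal d ∈ unitaryGroup n R)
    (A : Matrix n n R) (i : n) : (diagonal d * A * (diagonal d)ᴴ) i i = A i i := by
  rw [diagonal_mul_mul_conjTranspose_apply]
  linear_combination A i i * mul_star_self_of_diagonal_mem_unitaryGroup hd i

lemma diagonal_conj_apply_mul_star {d : n → R} (hd : diagonal d ∈ unitaryGroup n R)
    (A B : Matrix n n R) (i j : n) :
    (diagonal d * A * (diagonal d)ᴴ) i j * star ((diagonal d * B * (diagonal d)ᴴ) i j) =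
      A i j * star (B i j) := by
  have hi := mul_star_self_of_diagonal_mem_unitaryGroup hd i
  have hj := mul_star_self_of_diagonal_mem_unitaryGroup hd j
  simp only [diagonal_mul_mul_conjTranspose_apply, star_mul', star_star]
  linear_combination A i j * star (B i j) * (d i * star (d i) * hj + hi)

end Conjugation

section HermitianParts

variable {P A : Matrix (Fin 3) (Fin 3) ℂ}

lemma isHermitian_Pplus (hP : P ^ 2 = Pᴴ) : (Pplus P).IsHermitian := by
  rw [Pplus, hP]
  exact (isHermitian_add_transpose_self P).smul (by simp [isSelfAdjoint_iff])

lemma isHermitian_Pminus (hP : P ^ 2 = Pᴴ) : (Pminus P).IsHermitian := by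
  rw [IsHermitian, Pminus, hP, conjTranspose_smul, conjTranspose_sub, conjTranspose_conjTranspose,
    ← neg_sub P, smul_neg, ← neg_smul]
  simp

lemma re_trace_Pplus_mul (hP : P ^ 2 = Pᴴ) (hA : A.IsHermitian) :
    (trace (Pplus P * A)).re = 2 / √6 * (trace (P * A)).re := by
  rw [Pplus, hP, smul_mul, add_mul, trace_smul, trace_add,
    trace_conjTranspose_mul_of_isHermitian hA, smul_eq_mul, ← ofReal_inv, re_ofReal_mul, add_re,
    star_def, conj_re]
  ring

lemma re_trace_Pminus_mul (hP : P ^ 2 = Pᴴ) (hA : A.IsHermitian) :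
    (trace (Pminus P * A)).re = -(2 / √6) * (trace (P * A)).im := by
  rw [Pminus, hP, smul_mul, sub_mul, trace_smul, trace_sub,
    trace_conjTranspose_mul_of_isHermitian hA, smul_eq_mul, mul_comm I, mul_assoc, ← ofReal_inv,
    re_ofReal_mul, I_mul_re, sub_im, star_def, conj_im]
  ring

end HermitianParts

lemma isPrimitiveRoot_omega : IsPrimitiveRoot ω 3 := by
  simpa [ω] using isPrimitiveRoot_exp 3 three_ne_zero

lemma star_omega : star ω = ω ^ 2 := by
  rw [star_def, ← inv_eq_conj (isPrimitiveRoot_omega.norm'_eq_one three_ne_zero), inv_eq_iff_eq_inv]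
  exact eq_inv_of_mul_eq_one_right (by rw [← pow_succ, omega_cube])

lemma one_add_omega_add_omega_sq : 1 + ω + ω ^ 2 = 0 := by
  simpa [Finset.sum_range_succ] using isPrimitiveRoot_omega.geom_sum_eq_zero (by norm_num)

lemma sum_omega_pow_mul_star_omega_pow (i j : Fin 3) :
    ∑ m : Fin 3, ω ^ (i * m : ℕ) * star (ω ^ (j * m : ℕ)) = if i = j then 3 else 0 := by
  simpa only [mul_comm, Nat.cast_ofNat] using sum_pow_mul_star_pow isPrimitiveRoot_omega i j

lemma Xmat_apply (i j : Fin 3) : Xmat i j = if i = j + 1 then 1 else 0 := by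
  fin_cases i <;> fin_cases j <;> simp [Xmat]

lemma Zmat_eq_diagonal : Zmat = diagonal fun j : Fin 3 => ω ^ (j : ℕ) := by
  ext i j
  fin_cases i <;> fin_cases j <;> simp [Zmat]

lemma Xmat_mul_Zmat_pow_apply (m : ℕ) (i j : Fin 3) :
    (Xmat * Zmat ^ m) i j = if i = j + 1 then ω ^ (m * j : ℕ) else 0 := by
  rw [Zmat_eq_diagonal, diagonal_pow, mul_diagonal, Xmat_apply, Pi.pow_apply, ← pow_mul', ite_mul,
    one_mul, zero_mul]

lemma trace_Zmat_mul (A : Matrix (Fin 3) (Fin 3) ℂ) :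
    trace (Zmat * A) = ∑ j : Fin 3, ω ^ (j : ℕ) * A j j := by
  simp only [Zmat_eq_diagonal, trace, diag_apply, diagonal_mul]

lemma trace_Xmat_mul_Zmat_pow_mul (m : ℕ) (A : Matrix (Fin 3) (Fin 3) ℂ) :
    trace (Xmat * Zmat ^ m * A) = ∑ j : Fin 3, ω ^ (m * j : ℕ) * A j (j + 1) := by
  rw [trace_mul_comm]
  simp only [trace, diag_apply, mul_apply (M := A), Xmat_mul_Zmat_pow_apply, mul_ite, mul_zero,
    Finset.sum_ite_eq', Finset.mem_univ, if_true, mul_comm]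

/-- The Paulis `Z, X, XZ, XZ²` out of which the tuple `Q` is built. The last three are written
uniformly as `X Zᵐ` with `m : Fin 3`, the frequency of a discrete Fourier transform. -/
def pauli : Fin 4 → Matrix (Fin 3) (Fin 3) ℂ :=
  Fin.cons Zmat fun m : Fin 3 => Xmat * Zmat ^ (m : ℕ)

lemma pauli_zero : pauli 0 = Zmat := rfl

lemma pauli_succ (m : Fin 3) : pauli m.succ = Xmat * Zmat ^ (m : ℕ) := rfl

lemma pauli_eq : pauli = ![Zmat, Xmat, Xmat * Zmat, Xmat * Zmat ^ 2] := by
  refine congrArg (vecCons Zmat) (funext fun m => ?_)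
  fin_cases m <;> simp

lemma Q_castAdd (k : Fin 4) : Q (Fin.castAdd 4 k) = Pplus (pauli k) := by
  rw [pauli_eq]
  fin_cases k <;> rfl

lemma Q_natAdd (k : Fin 4) : Q (Fin.natAdd 4 k) = Pminus (pauli k) := by
  rw [pauli_eq]
  fin_cases k <;> rfl

lemma pauli_sq (k : Fin 4) : pauli k ^ 2 = (pauli k)ᴴ := by
  induction k using Fin.cases with
  | zero =>
    rw [pauli_zero, Zmat_eq_diagonal, diagonal_pow, diagonal_conjTranspose]
    congr 1 with j
    rw [Pi.pow_apply, Pi.star_apply, star_pow, star_omega, pow_right_comm]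
  | succ m =>
    have hcube : (ω ^ (m : ℕ)) ^ 3 = 1 := by rw [pow_right_comm, omega_cube, one_pow]
    ext i j
    rw [pauli_succ, pow_two, mul_apply, Fin.sum_univ_three, conjTranspose_apply]
    simp only [Xmat_mul_Zmat_pow_apply, apply_ite star, star_pow, star_omega, star_zero, pow_mul,
      pow_right_comm ω 2]
    fin_cases i <;> fin_cases j <;> simp <;> grind

lemma isHermitian_Q (i : Fin 8) : (Q i).IsHermitian := by
  induction i using Fin.addCases (m := 4) (n := 4) with
  | left k => exact Q_castAdd k ▸ isHermitian_Pplus (pauli_sq k)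
  | right k => exact Q_natAdd k ▸ isHermitian_Pminus (pauli_sq k)

lemma adj_castAdd_apply (U : Matrix (Fin 3) (Fin 3) ℂ) (k : Fin 4) (j : Fin 8) :
    adj U (Fin.castAdd 4 k) j = 2 / √6 * (trace (pauli k * (U * Q j * Uᴴ))).re := by
  rw [← re_trace_Pplus_mul (pauli_sq k) (isHermitian_mul_mul_conjTranspose U (isHermitian_Q j)),
    ← Q_castAdd, adj, of_apply]
  simp only [Matrix.mul_assoc]

lemma adj_natAdd_apply (U : Matrix (Fin 3) (Fin 3) ℂ) (k : Fin 4) (j : Fin 8) :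
    adj U (Fin.natAdd 4 k) j = -(2 / √6) * (trace (pauli k * (U * Q j * Uᴴ))).im := by
  rw [← re_trace_Pminus_mul (pauli_sq k) (isHermitian_mul_mul_conjTranspose U (isHermitian_Q j)),
    ← Q_natAdd, adj, of_apply]
  simp only [Matrix.mul_assoc]

lemma trace_pauli_mul_pauli (k l : Fin 4) : trace (pauli k * pauli l) = 0 := by
  induction k using Fin.cases with
  | zero =>
    rw [pauli_zero, trace_Zmat_mul]
    induction l using Fin.cases with
    | zero =>
      simp only [pauli_zero, Zmat_eq_diagonal, diagonal_apply_eq, Fin.sum_univ_three, Fin.val_zero,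
        Fin.val_one, Fin.val_two]
      linear_combination one_add_omega_add_omega_sq + ω * omega_cube
    | succ l => simp [pauli_succ, Xmat_mul_Zmat_pow_apply]
  | succ k =>
    rw [pauli_succ, trace_Xmat_mul_Zmat_pow_mul]
    induction l using Fin.cases with
    | zero => simp [pauli_zero, Zmat_eq_diagonal]
    | succ l =>
      have hne : ∀ x : Fin 3, x ≠ x + 1 + 1 := by decide
      simp [pauli_succ, Xmat_mul_Zmat_pow_apply, hne]

lemma trace_pauli_mul_conjTranspose_pauli (k l : Fin 4) :
    trace (pauli k * (pauli l)ᴴ) = if k = l then 3 else 0 := by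
  induction k using Fin.cases with
  | zero =>
    rw [pauli_zero, trace_Zmat_mul]
    induction l using Fin.cases with
    | zero =>
      simpa [pauli_zero, Zmat_eq_diagonal] using sum_omega_pow_mul_star_omega_pow 1 1
    | succ l => simp [pauli_succ, Xmat_mul_Zmat_pow_apply, (Fin.succ_ne_zero l).symm]
  | succ k =>
    rw [pauli_succ, trace_Xmat_mul_Zmat_pow_mul]
    induction l using Fin.cases with
    | zero => simp [pauli_zero, Zmat_eq_diagonal]
    | succ l =>
      simpa [pauli_succ, Xmat_mul_Zmat_pow_apply] using sum_omega_pow_mul_star_omega_pow k l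

lemma trace_pauli_mul_Pplus_pauli (k l : Fin 4) :
    trace (pauli k * Pplus (pauli l)) = if k = l then ((3 / √6 : ℝ) : ℂ) else 0 := by
  rw [Pplus, pauli_sq, Matrix.mul_smul, mul_add, trace_smul, trace_add, trace_pauli_mul_pauli,
    trace_pauli_mul_conjTranspose_pauli]
  split_ifs <;> simp [div_eq_inv_mul]

lemma trace_pauli_mul_Pminus_pauli (k l : Fin 4) :
    trace (pauli k * Pminus (pauli l)) = if k = l then -((3 / √6 : ℝ) : ℂ) * I else 0 := by
  rw [Pminus, pauli_sq, Matrix.mul_smul, mul_sub, trace_smul, trace_sub, trace_pauli_mul_pauli,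
    trace_pauli_mul_conjTranspose_pauli]
  split_ifs <;> simp
  ring

lemma adj_one : adj 1 = 1 := by
  have hsqrt : 2 / √6 * (3 / √6) = 1 := by
    rw [div_mul_div_comm, Real.mul_self_sqrt (by norm_num)]
    norm_num
  have hne : ∀ k l : Fin 4, Fin.castAdd 4 k ≠ Fin.natAdd 4 l := by decide
  ext i j
  induction i using Fin.addCases (m := 4) (n := 4) with
  | left k =>
    rw [adj_castAdd_apply, conjTranspose_one, Matrix.one_mul, Matrix.mul_one]
    induction j using Fin.addCases (m := 4) (n := 4) with
    | left l =>
      rw [Q_castAdd, trace_pauli_mul_Pplus_pauli, one_apply]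
      simp only [(Fin.castAdd_injective 4 4).eq_iff]
      split_ifs <;> simp [hsqrt]
    | right l =>
      rw [Q_natAdd, trace_pauli_mul_Pminus_pauli, one_apply_ne (hne k l)]
      split_ifs <;> simp
  | right k =>
    rw [adj_natAdd_apply, conjTranspose_one, Matrix.one_mul, Matrix.mul_one]
    induction j using Fin.addCases (m := 4) (n := 4) with
    | left l =>
      rw [Q_castAdd, trace_pauli_mul_Pplus_pauli, one_apply_ne (hne l k).symm]
      split_ifs <;> simp
    | right l =>
      rw [Q_natAdd, trace_pauli_mul_Pminus_pauli, one_apply]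
      simp only [(Fin.natAdd_injective 4 4).eq_iff]
      split_ifs <;> simp [hsqrt]

lemma transpose_mul_Ωm_mul_apply {n : Type*} (A : Matrix (Fin 8) n ℝ) (i j : n) :
    (Aᵀ * Ωm * A) i j = ∑ k : Fin 4, (A (Fin.castAdd 4 k) i * A (Fin.natAdd 4 k) j -
      A (Fin.natAdd 4 k) i * A (Fin.castAdd 4 k) j) := by
  simp [mul_apply, Fin.sum_univ_eight, Fin.sum_univ_four, Ωm]
  ring

/-- The sesquilinear form `∑ₖ tr(Pₖ A) * star tr(Pₖ B)`, linear in the first argument. On Hermitian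
matrices its imaginary part is, up to a factor, the symplectic form `Ω` in the coordinates
`A ↦ tr(Qᵢ A)`. -/
def pauliForm (A B : Matrix (Fin 3) (Fin 3) ℂ) : ℂ :=
  ∑ k, trace (pauli k * A) * star (trace (pauli k * B))

lemma pauliForm_eq (A B : Matrix (Fin 3) (Fin 3) ℂ) :
    pauliForm A B = trace (Zmat * A) * star (trace (Zmat * B)) +
      3 * ∑ j : Fin 3, A j (j + 1) * star (B j (j + 1)) := by
  have hparseval := sum_fourier_mul_star_fourier isPrimitiveRoot_omega
    (fun j => A j (j + 1)) (fun j => B j (j + 1))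
  rw [pauliForm, Fin.sum_univ_succ, pauli_zero]
  simp only [pauli_succ, trace_Xmat_mul_Zmat_pow_mul]
  rw [hparseval, Nat.cast_ofNat]

lemma pauliForm_diagonal_conj {d : Fin 3 → ℂ} (hd : diagonal d ∈ unitaryGroup (Fin 3) ℂ)
    (A B : Matrix (Fin 3) (Fin 3) ℂ) :
    pauliForm (diagonal d * A * (diagonal d)ᴴ) (diagonal d * B * (diagonal d)ᴴ) =
      pauliForm A B := by
  simp only [pauliForm_eq, trace_Zmat_mul, diagonal_conj_apply_self hd,
    diagonal_conj_apply_mul_star hd]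

lemma transpose_adj_mul_Ωm_mul_adj_apply (U : Matrix (Fin 3) (Fin 3) ℂ) (i j : Fin 8) :
    ((adj U)ᵀ * Ωm * adj U) i j = 2 / 3 * (pauliForm (U * Q i * Uᴴ) (U * Q j * Uᴴ)).im := by
  have hsqrt : (2 / √6) ^ 2 = (2 / 3 : ℝ) := by
    rw [div_pow, Real.sq_sqrt (by norm_num)]
    norm_num
  simp only [transpose_mul_Ωm_mul_apply, adj_castAdd_apply, adj_natAdd_apply, pauliForm, im_sum,
    mul_im, star_def, conj_re, conj_im, Finset.mul_sum, ← hsqrt]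
  exact Finset.sum_congr rfl fun k _ => by ring

/-- For every diagonal 3×3 unitary matrix D, the adjoint
representation D̂ is symplectic: D̂ᵀ·Ω·D̂ = Ω. -/
theorem adjoint_of_diagonal_is_symplectic
    (D : Matrix (Fin 3) (Fin 3) ℂ) (hD : D ∈ Matrix.unitaryGroup (Fin 3) ℂ)
    (hdiag : D.IsDiag) :
    (adj D)ᵀ * Ωm * adj D = Ωm := by
  obtain ⟨d, rfl⟩ : ∃ d, diagonal d = D := ⟨D.diag, hdiag.diagonal_diag⟩
  calc (adj (diagonal d))ᵀ * Ωm * adj (diagonal d)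
      = (adj 1)ᵀ * Ωm * adj 1 := by
        ext i j
        simp only [transpose_adj_mul_Ωm_mul_adj_apply, pauliForm_diagonal_conj hD, Matrix.one_mul,
          conjTranspose_one, Matrix.mul_one]
    _ = Ωm := by rw [adj_one, transpose_one, Matrix.one_mul, Matrix.mul_one]

end
end
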